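/- Let $U$ be a convex subset of a real normed space with $\|u-u'\|\le R$ for all $u,u'\in U$, let $F:U\to\mathbb{R}$ be convex and $L$-Lipschitz on $U$ for a constant $L\ge 0$ (that is, $|F(u)-F(v)|\le L\|u-v\|$ for all $u,v\in U$), and let $G:U\to\mathbb{R}$ be convex. Suppose Slater's condition holds: there exist $u_0\in U$ and $\delta>0$ with $G(u_0)\le-\delta$. Fix $\varepsilon$ with $0<\varepsilon<\delta$. If $u^*$ minimizes $F$ over $\{u\in U: G(u)\le 0\}$ and $u^{*,\varepsilon}$ minimizes $F$ over $\{u\in U: G(u)\le-\varepsilon\}$, then $F(u^{*,\varepsilon})-F(u^*)\le LR\varepsilon/\delta$. -/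

import Mathlib

open scoped NNReal

/-- Comparison of a convex problem with its `ε`-tightened version: if `ustar` minimizes the convex
`L`-Lipschitz function `F` over `{u ∈ U | G u ≤ 0}` and `ueps` minimizes `F` over
`{u ∈ U | G u ≤ -ε}`, with a Slater point `G u₀ ≤ -δ`, `0 < ε < δ`, and all distances in `U` at
most `R`, then `F ueps - F ustar ≤ L R ε / δ`. -/
theorem stmt2 {E : Type*} [NormedAddCommGroup E] [NormedSpace ℝ E]
    (U : Set E) (hU : Convex ℝ U)
    (R : ℝ) (hR : ∀ u ∈ U, ∀ u' ∈ U, ‖u - u'‖ ≤ R)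
    (F G : E → ℝ) (hF : ConvexOn ℝ U F)
    (L : ℝ≥0) (hL : LipschitzOnWith L F U)
    (hG : ConvexOn ℝ U G)
    (δ : ℝ) (hδ : 0 < δ) (hslater : ∃ u₀ ∈ U, G u₀ ≤ -δ)
    (ε : ℝ) (hε : 0 < ε) (hεδ : ε < δ)
    (ustar : E) (hustar : ustar ∈ {u ∈ U | G u ≤ 0})
    (hmin : IsMinOn F {u ∈ U | G u ≤ 0} ustar)
    (ueps : E) (hueps : ueps ∈ {u ∈ U | G u ≤ -ε})
    (hmineps : IsMinOn F {u ∈ U | G u ≤ -ε} ueps) :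
    F ueps - F ustar ≤ (L : ℝ) * R * ε / δ := by
  obtain ⟨u₀, hu₀, hGu₀⟩ := hslater
  obtain ⟨hsU, hsG⟩ := hustar
  have ht0 : 0 ≤ ε / δ := by positivity
  have ht1 : 0 ≤ 1 - ε / δ := sub_nonneg.2 ((div_le_one hδ).2 hεδ.le)
  have hsum : 1 - ε / δ + ε / δ = 1 := sub_add_cancel _ _
  -- Moving from `ustar` towards the Slater point by the fraction `ε / δ` reaches the tightened set.
  set v : E := (1 - ε / δ) • ustar + (ε / δ) • u₀ with hv
  have hvU : v ∈ U := hU hsU hu₀ ht1 ht0 hsum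
  have hvG : G v ≤ -ε := by
    calc G v ≤ (1 - ε / δ) * G ustar + ε / δ * G u₀ := hG.2 hsU hu₀ ht1 ht0 hsum
      _ ≤ (1 - ε / δ) * 0 + ε / δ * (-δ) := by gcongr
      _ = -ε := by field_simp; ring
  have hdist : ‖v - ustar‖ ≤ ε / δ * R := by
    have hsub : v - ustar = (ε / δ) • (u₀ - ustar) := by rw [hv]; module
    rw [hsub, norm_smul, Real.norm_of_nonneg ht0]
    exact mul_le_mul_of_nonneg_left (hR u₀ hu₀ ustar hsU) ht0
  calc F ueps - F ustar ≤ F v - F ustar := sub_le_sub_right (hmineps ⟨hvU, hvG⟩) _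
    _ ≤ ‖F v - F ustar‖ := Real.le_norm_self _
    _ ≤ L * ‖v - ustar‖ := hL.norm_sub_le hvU hsU
    _ ≤ L * (ε / δ * R) := by gcongr
    _ = (L : ℝ) * R * ε / δ := by ring
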